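/- arXiv:2605.11988 — 3 statements merged into one kernel-verified Lean document; each statement's English description precedes it below -/
import Mathlib

section
/- Let G be a finite group, let p be a prime, let x be a p-element of G, and let y ∈ Sub_G(x). If x and y are conjugate in G, then x and y are conjugate in Sub_G(x). -/
/-- `H` is normal in `K`, where `H ≤ K` are subgroups of an ambient group `G`. -/
def NormalIn {G : Type*} [Group G] (H K : Subgroup G) : Prop :=
  H ≤ K ∧ ∀ k ∈ K, ∀ h ∈ H, k * h * k⁻¹ ∈ H

/-- `H` is subnormal in `K`: there is a finite chain `H = H₀ ⊴ H₁ ⊴ ⋯ ⊴ Hₙ = K`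
in which each term is normal in the next. -/
def SubnormalIn {G : Type*} [Group G] (H K : Subgroup G) : Prop :=
  ∃ (n : ℕ) (c : ℕ → Subgroup G), c 0 = H ∧ c n = K ∧ ∀ i < n, NormalIn (c i) (c (i + 1))

/-- Casolo's subnormalizer set `S_G(x) = {g ∈ G : ⟨x⟩ is subnormal in ⟨x, g⟩}`. -/
def subnormalizerSet (G : Type*) [Group G] (x : G) : Set G :=
  {g : G | SubnormalIn (Subgroup.zpowers x) (Subgroup.closure {x, g})}

/-- The subnormalizer subgroup `Sub_G(x) = ⟨S_G(x)⟩`. -/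
def subnormalizer (G : Type*) [Group G] (x : G) : Subgroup G :=
  Subgroup.closure (subnormalizerSet G x)

/-!
If `⟨x⟩` is subnormal in `K`, it is subnormal in `⟨x, k⟩` for every `k ∈ K`, so `K ≤ Sub_G(x)`.
Subgroups of nilpotent groups are subnormal, so this applies to `K = N_G(P)` for each Sylow
`p`-subgroup `P` containing `x`. Now let `H = Sub_G(x)` and `g x g⁻¹ ∈ H`, and fix such a `P`. By
Sylow's theorem in `H`, `g x g⁻¹` lies in `h P h⁻¹` for some `h ∈ H`. Then `g⁻¹ h P h⁻¹ g` contains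
`x`, hence lies in `H` and is `H`-conjugate to `P`. Thus `g⁻¹ h ∈ H N_G(P) = H`, and so `g ∈ H`.
-/

section Subnormal

variable {G : Type*} [Group G]

theorem isSubnormal_of_isNilpotent [Group.IsNilpotent G] (H : Subgroup G) : H.IsSubnormal := by
  refine Group.nilpotent_center_quotient_ind (P := fun G _ _ ↦ ∀ H : Subgroup G, H.IsSubnormal) G
    (fun _ _ _ _ ↦ .of_subsingleton) (fun G _ _ ih H ↦ ?_) H
  let π := QuotientGroup.mk' (Subgroup.center G)
  have normal_in_preimage : (H.subgroupOf ((H.map π).comap π)).Normal := by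
    refine Subgroup.normal_subgroupOf_of_le_normalizer ?_
    rw [Subgroup.comap_map_eq, QuotientGroup.ker_mk']
    exact sup_le Subgroup.le_normalizer (Subgroup.center_le_normalizer _)
  exact .step H _ (Subgroup.le_comap_map π H) ((ih (H.map π)).comap π) normal_in_preimage

theorem normalIn_map {G' : Type*} [Group G'] (f : G →* G') {H K : Subgroup G} (hHK : H ≤ K)
    (h : (H.subgroupOf K).Normal) : NormalIn (H.map f) (K.map f) := by
  refine ⟨Subgroup.map_mono hHK, ?_⟩
  rintro _ ⟨k, hk, rfl⟩ _ ⟨a, ha, rfl⟩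
  exact ⟨k * a * k⁻¹, (Subgroup.normal_subgroupOf_iff hHK).1 h a k ha hk, by simp⟩

theorem subnormalIn_of_isSubnormal_subgroupOf {H K : Subgroup G} (hHK : H ≤ K)
    (h : (H.subgroupOf K).IsSubnormal) : SubnormalIn H K := by
  obtain ⟨n, c, hmono, hnormal, h0, hn⟩ := h.exists_chain
  refine ⟨n, fun i ↦ (c i).map K.subtype, ?_, ?_, fun i _ ↦
    normalIn_map K.subtype (hmono i.le_succ) (hnormal i)⟩
  · simp only [h0, Subgroup.map_subgroupOf_eq_of_le hHK]
  · simp only [hn, ← MonoidHom.range_eq_map, Subgroup.range_subtype]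

theorem le_subnormalizer_of_isSubnormal {x : G} {K : Subgroup G} (hxK : x ∈ K)
    (h : ((Subgroup.zpowers x).subgroupOf K).IsSubnormal) : K ≤ subnormalizer G x := by
  intro k hk
  have closure_le : Subgroup.closure {x, k} ≤ K := by
    simp [Set.insert_subset_iff, hxK, hk]
  have zpowers_le : Subgroup.zpowers x ≤ Subgroup.closure {x, k} :=
    Subgroup.zpowers_le.2 (Subgroup.subset_closure (by simp))
  exact Subgroup.subset_closure <| subnormalIn_of_isSubnormal_subgroupOf zpowers_le <|
    h.comap (Subgroup.inclusion closure_le)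

theorem normalizer_le_subnormalizer {P : Subgroup G} [Group.IsNilpotent P] {x : G} (hx : x ∈ P) :
    Subgroup.normalizer (P : Set G) ≤ subnormalizer G x := by
  set N := Subgroup.normalizer (P : Set G)
  have hPN : P ≤ N := Subgroup.le_normalizer
  have : Group.IsNilpotent (P.subgroupOf N) :=
    (Group.isNilpotent_congr (Subgroup.subgroupOfEquivOfLe hPN)).2 ‹_›
  have P_normal : (P.subgroupOf N).Normal := Subgroup.normal_in_normalizer
  exact le_subnormalizer_of_isSubnormal (hPN hx) <|
    .trans (K := P.subgroupOf N) (Subgroup.comap_mono (Subgroup.zpowers_le.2 hx))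
      (isSubnormal_of_isNilpotent _) P_normal.isSubnormal

end Subnormal

section Sylow

variable {G : Type*} [Group G] {p : ℕ} {H : Subgroup G}

theorem exists_mem_sylow_of_orderOf_eq_pow {x : G} (hx : ∃ k : ℕ, orderOf x = p ^ k) :
    ∃ P : Sylow p G, x ∈ P := by
  obtain ⟨k, hk⟩ := hx
  have hp : IsPGroup p (Subgroup.zpowers x) := IsPGroup.of_card ((Nat.card_zpowers x).trans hk)
  obtain ⟨P, hP⟩ := hp.exists_le_sylow
  exact ⟨P, hP (Subgroup.mem_zpowers x)⟩

open scoped Pointwise in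
theorem mem_smul_sylow_iff {P : Sylow p G} {g x : G} : x ∈ g • P ↔ g⁻¹ * x * g ∈ P := by
  change x ∈ MulAut.conj g • (P : Subgroup G) ↔ g⁻¹ * x * g ∈ (P : Subgroup G)
  rw [Subgroup.mem_pointwise_smul_iff_inv_smul_mem, ← map_inv, MulAut.smul_def,
    MulAut.conj_apply, inv_inv]

variable [Fact p.Prime] [Finite (Sylow p H)]

theorem exists_mem_smul_sylow_eq {P Q : Sylow p G} (hP : P ≤ H) (hQ : Q ≤ H) :
    ∃ h ∈ H, h • P = Q := by
  obtain ⟨h, hh⟩ := MulAction.exists_smul_eq H (P.subtype hP) (Q.subtype hQ)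
  rw [Sylow.smul_subtype] at hh
  exact ⟨h, h.2, Sylow.subtype_injective hh⟩

theorem exists_mem_smul_sylow {P : Sylow p G} (hP : P ≤ H) {y : G} (hyH : y ∈ H)
    (hy : ∃ k : ℕ, orderOf y = p ^ k) : ∃ h ∈ H, y ∈ h • P := by
  rw [← Subgroup.orderOf_mk y hyH] at hy
  obtain ⟨R, hR⟩ := exists_mem_sylow_of_orderOf_eq_pow hy
  obtain ⟨h, rfl⟩ := MulAction.exists_smul_eq H (P.subtype hP) R
  rw [Sylow.smul_subtype] at hR
  exact ⟨h, h.2, hR⟩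

theorem mem_of_conj_mem_of_normalizer_sylow_le {x g : G} (hx : ∃ k : ℕ, orderOf x = p ^ k)
    (hH : ∀ P : Sylow p G, x ∈ P → Subgroup.normalizer (P : Set G) ≤ H)
    (hg : g * x * g⁻¹ ∈ H) : g ∈ H := by
  have sylow_le (P : Sylow p G) (hxP : x ∈ P) : P ≤ H := Subgroup.le_normalizer.trans (hH P hxP)
  obtain ⟨P, hxP⟩ := exists_mem_sylow_of_orderOf_eq_pow hx
  have orderOf_conj : orderOf (g * x * g⁻¹) = orderOf x := (MulAut.conj g).orderOf_eq x
  obtain ⟨h, hhH, hhP⟩ : ∃ h ∈ H, g * x * g⁻¹ ∈ h • P :=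
    exists_mem_smul_sylow (sylow_le P hxP) hg (orderOf_conj ▸ hx)
  have hxQ : x ∈ (g⁻¹ * h) • P := by
    rw [mem_smul_sylow_iff] at hhP ⊢
    simpa [mul_assoc] using hhP
  obtain ⟨t, htH, ht⟩ : ∃ t ∈ H, t • (g⁻¹ * h) • P = P :=
    exists_mem_smul_sylow_eq (sylow_le _ hxQ) (sylow_le P hxP)
  have mem_normalizer : t * (g⁻¹ * h) ∈ Subgroup.normalizer (P : Set G) :=
    Sylow.smul_eq_iff_mem_normalizer.1 (by rw [mul_smul, ht])
  have product_mem : t * (g⁻¹ * h) ∈ H := hH P hxP mem_normalizer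
  rwa [Subgroup.mul_mem_cancel_left _ htH, Subgroup.mul_mem_cancel_right _ hhH,
    inv_mem_iff] at product_mem

end Sylow

theorem subnormalizer_fusion_general {G : Type*} [Group G] {p : ℕ} [Fact p.Prime]
    [Finite (Sylow p G)] [∀ P : Sylow p G, Group.IsNilpotent P] {x g : G}
    (hx : ∃ k : ℕ, orderOf x = p ^ k) (hg : g * x * g⁻¹ ∈ subnormalizer G x) :
    g ∈ subnormalizer G x :=
  mem_of_conj_mem_of_normalizer_sylow_le hx (fun _ ↦ normalizer_le_subnormalizer) hg

/-- **Fusion in the subnormalizer.** Let `x` be a `p`-element of a finite group `G` and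
let `y ∈ Sub_G(x)`.  If `x` and `y` are conjugate in `G`, then they are conjugate in
`Sub_G(x)`. -/
theorem subnormalizer_fusion {G : Type*} [Group G] [Finite G] (p : ℕ) [Fact p.Prime]
    (x : G) (hx : ∃ k : ℕ, orderOf x = p ^ k) (y : G) (hy : y ∈ subnormalizer G x)
    (hconj : ∃ g : G, g * x * g⁻¹ = y) :
    ∃ s ∈ subnormalizer G x, s * x * s⁻¹ = y := by
  have (P : Sylow p G) : Group.IsNilpotent P := P.isPGroup'.isNilpotent
  obtain ⟨g, rfl⟩ := hconj
  exact ⟨g, subnormalizer_fusion_general hx hy, rfl⟩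
end

section
/- Let G be a finite group, let p be a prime, let x be a p-element of G, and let m be a natural number. Then x and x^m are conjugate in G if and only if x and x^m are conjugate in Sub_G(x). -/
/-!
If `g * x * g⁻¹` is a power of `x`, then conjugation by `g` maps `⟨x⟩` into itself, so the
conjugates `g⁻ⁿ ⟨x⟩ gⁿ` form an ascending chain of cyclic groups. Their union `A` is abelian,
contains `x` and is normalized by `g`, so `⟨x⟩ ⊴ A ⊴ ⟨x, g⟩`. Thus every such `g` already lies in
`S_G(x)`.
-/

section

variable {G : Type*} [Group G]

theorem normalIn_iff_le_normalizer {H K : Subgroup G} :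
    NormalIn H K ↔ H ≤ K ∧ K ≤ Subgroup.normalizer H :=
  and_congr_right' Subgroup.le_normalizer_iff.symm

theorem normalIn_of_isMulCommutative {H K : Subgroup G} [IsMulCommutative K] (hHK : H ≤ K) :
    NormalIn H K := by
  refine ⟨hHK, fun k hk h hh => ?_⟩
  rwa [setLike_mul_comm hk (hHK hh), mul_inv_cancel_right]

theorem SubnormalIn.refl (H : Subgroup G) : SubnormalIn H H :=
  ⟨0, fun _ => H, rfl, rfl, fun _ hi => absurd hi (Nat.not_lt_zero _)⟩

theorem SubnormalIn.trans_normalIn {H K L : Subgroup G} (hHK : SubnormalIn H K)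
    (hKL : NormalIn K L) : SubnormalIn H L := by
  obtain ⟨n, c, hc_zero, hc_last, hc_normal⟩ := hHK
  refine ⟨n + 1, fun i => if i ≤ n then c i else L, by simpa using hc_zero, by simp, ?_⟩
  intro i hi
  obtain hin | rfl := Nat.lt_succ_iff_lt_or_eq.mp hi
  · simpa [hin.le, Nat.succ_le_iff.mpr hin] using hc_normal i hin
  · simpa [hc_last] using hKL

/-- The subgroup generated by the conjugates `g⁻ⁿ H gⁿ` for `n : ℕ`, each encoded as the preimage of
`H` under conjugation by `gⁿ`. It serves as the middle term of the chain from `H` to `⟨H, g⟩`: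
when `g H g⁻¹ ≤ H` it is the ascending union of these conjugates. -/
def iSupConjPow (H : Subgroup G) (g : G) : Subgroup G :=
  ⨆ n : ℕ, H.comap (MulAut.conj (g ^ n)).toMonoidHom

theorem le_iSupConjPow (H : Subgroup G) (g : G) : H ≤ iSupConjPow H g :=
  le_iSup_of_le 0 fun h hh => by simpa using hh

theorem iSupConjPow_le {H K : Subgroup G} {g : G} (hHK : H ≤ K) (hg : g ∈ K) :
    iSupConjPow H g ≤ K := by
  refine iSup_le fun n y hy => ?_
  have hgn : g ^ n ∈ K := pow_mem hg n
  have hconj : g ^ n * y * (g ^ n)⁻¹ ∈ K := hHK hy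
  rwa [K.mul_mem_cancel_right (inv_mem hgn), K.mul_mem_cancel_left hgn] at hconj

variable {H : Subgroup G} {g : G}

theorem monotone_comap_conj_pow (hH : ∀ h ∈ H, g * h * g⁻¹ ∈ H) :
    Monotone fun n : ℕ => H.comap (MulAut.conj (g ^ n)).toMonoidHom :=
  monotone_nat_of_le_succ fun n y hy => by
    simpa [pow_succ', mul_assoc] using hH _ hy

theorem mem_iSupConjPow_iff (hH : ∀ h ∈ H, g * h * g⁻¹ ∈ H) {y : G} :
    y ∈ iSupConjPow H g ↔ ∃ n : ℕ, g ^ n * y * (g ^ n)⁻¹ ∈ H :=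
  Subgroup.mem_iSup_of_directed (monotone_comap_conj_pow hH).directed_le

theorem isMulCommutative_iSupConjPow [IsMulCommutative H] (hH : ∀ h ∈ H, g * h * g⁻¹ ∈ H) :
    IsMulCommutative (iSupConjPow H g) := by
  have (n : ℕ) : IsMulCommutative (H.comap (MulAut.conj (g ^ n)).toMonoidHom) :=
    H.comap_injective_isMulCommutative (MulAut.conj (g ^ n)).injective
  exact Subgroup.isMulCommutative_iSup (monotone_comap_conj_pow hH).directed_le

theorem mem_normalizer_iSupConjPow (hH : ∀ h ∈ H, g * h * g⁻¹ ∈ H) :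
    g ∈ Subgroup.normalizer (iSupConjPow H g) := by
  have conj_pow_conj (n : ℕ) (y : G) :
      g ^ n * (g * y * g⁻¹) * (g ^ n)⁻¹ = g ^ (n + 1) * y * (g ^ (n + 1))⁻¹ := by
    simp only [pow_succ, mul_inv_rev, mul_assoc]
  refine Subgroup.mem_normalizer_iff.mpr fun y => ?_
  simp only [mem_iSupConjPow_iff hH, conj_pow_conj]
  exact ⟨fun ⟨n, hn⟩ => ⟨n, monotone_comap_conj_pow hH n.le_succ hn⟩, fun ⟨n, hn⟩ => ⟨n + 1, hn⟩⟩

theorem subnormalIn_sup_zpowers_of_conj_mem [IsMulCommutative H] (hH : ∀ h ∈ H, g * h * g⁻¹ ∈ H) :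
    SubnormalIn H (H ⊔ Subgroup.zpowers g) := by
  have := isMulCommutative_iSupConjPow hH
  have hg : g ∈ H ⊔ Subgroup.zpowers g := Subgroup.mem_sup_right (Subgroup.mem_zpowers g)
  have hbottom : NormalIn H (iSupConjPow H g) := normalIn_of_isMulCommutative (le_iSupConjPow H g)
  have htop : NormalIn (iSupConjPow H g) (H ⊔ Subgroup.zpowers g) :=
    normalIn_iff_le_normalizer.mpr ⟨iSupConjPow_le le_sup_left hg,
      sup_le ((le_iSupConjPow H g).trans Subgroup.le_normalizer)
        (Subgroup.zpowers_le.mpr (mem_normalizer_iSupConjPow hH))⟩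
  exact ((SubnormalIn.refl H).trans_normalIn hbottom).trans_normalIn htop

theorem conj_mem_zpowers {x : G} (hx : g * x * g⁻¹ ∈ Subgroup.zpowers x) :
    ∀ h ∈ Subgroup.zpowers x, g * h * g⁻¹ ∈ Subgroup.zpowers x := by
  rintro _ ⟨k, rfl⟩
  simpa only [conj_zpow] using zpow_mem hx k

theorem mem_subnormalizerSet_of_conj_mem_zpowers {x : G}
    (hx : g * x * g⁻¹ ∈ Subgroup.zpowers x) : g ∈ subnormalizerSet G x := by
  have hclosure : Subgroup.closure {x, g} = Subgroup.zpowers x ⊔ Subgroup.zpowers g := by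
    rw [Set.insert_eq, Subgroup.closure_union, Subgroup.zpowers_eq_closure,
      Subgroup.zpowers_eq_closure]
  change SubnormalIn (Subgroup.zpowers x) (Subgroup.closure {x, g})
  rw [hclosure]
  exact subnormalIn_sup_zpowers_of_conj_mem (conj_mem_zpowers hx)

theorem conj_pow_iff_conj_in_subnormalizer_general (x : G) (m : ℤ) :
    (∃ g : G, g * x * g⁻¹ = x ^ m) ↔ ∃ s ∈ subnormalizer G x, s * x * s⁻¹ = x ^ m := by
  refine ⟨fun ⟨g, hg⟩ => ⟨g, Subgroup.subset_closure ?_, hg⟩, fun ⟨s, _, hs⟩ => ⟨s, hs⟩⟩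
  exact mem_subnormalizerSet_of_conj_mem_zpowers ⟨m, hg.symm⟩

end

/-- Let `x` be a `p`-element of a finite group `G` and let `m` be a natural number.
Then `x` and `x ^ m` are conjugate in `G` if and only if `x` and `x ^ m` are conjugate
in `Sub_G(x)`. -/
theorem conj_pow_iff_conj_in_subnormalizer {G : Type*} [Group G] [Finite G] (p : ℕ)
    [Fact p.Prime] (x : G) (hx : ∃ k : ℕ, orderOf x = p ^ k) (m : ℕ) :
    (∃ g : G, g * x * g⁻¹ = x ^ m) ↔
      (∃ s ∈ subnormalizer G x, s * x * s⁻¹ = x ^ m) := by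
  simpa only [zpow_natCast] using conj_pow_iff_conj_in_subnormalizer_general x (m : ℤ)
end

section
/- Let G be a finite group, let p be a prime, and let x be a p-element of G. Then ℚ_G(x) = ℚ_{Sub_G(x)}(x); that is, the subfield of ℂ generated over ℚ by the values χ(x) for χ ranging over the irreducible complex characters of G equals the subfield of ℂ generated over ℚ by the values ψ(x) for ψ ranging over the irreducible complex characters of the subgroup Sub_G(x) (where x is viewed as an element of Sub_G(x)). -/
lemma mem_subnormalizerSet_self {G : Type*} [Group G] (x : G) :
    x ∈ subnormalizerSet G x := by
  refine ⟨0, fun _ => Subgroup.zpowers x, rfl, ?_, by omega⟩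
  show Subgroup.zpowers x = Subgroup.closure {x, x}
  rw [Set.pair_eq_singleton, ← Subgroup.zpowers_eq_closure]

lemma mem_subnormalizer_self {G : Type*} [Group G] (x : G) :
    x ∈ subnormalizer G x :=
  Subgroup.subset_closure (mem_subnormalizerSet_self x)

open CategoryTheory in
/-- The set of irreducible complex characters of `H`. -/
noncomputable def Irr (H : Type) [Group H] : Set (H → ℂ) :=
  {χ | ∃ V : FDRep ℂ H, Simple V ∧ χ = FDRep.character V}

/-!
Let `H ≤ G` contain the normalizer of `⟨x⟩`. If `n` is the order of `x`, an automorphism `τ` of `ℂ`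
raises the `n`-th roots of unity to some power `t`, hence sends `χ(x)` to `χ(x ^ t)` for every
character `χ`, of `G` as of `H`. Since the irreducible characters separate conjugacy classes, `τ`
fixes the field of values of `x` in `G` exactly when `x` and `x ^ t` are conjugate in `G`. An
element conjugating `x` to `x ^ t` normalizes `⟨x⟩`, so lies in `H`: the condition is the same for
`G` and `H`, and Galois theory shows that the two fields agree. If `g` normalizes `⟨x⟩`, then
`⟨x⟩ ⊴ ⟨x, g⟩`, so the subnormalizer of `x` is such a subgroup.
-/

open Module
open scoped MonoidAlgebra

section FieldAutomorphisms

theorem exists_ringEquiv_extending {K L : Type*} [Field K] [Field L] [Algebra K L] [IsAlgClosed L]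
    (σ : K ≃+* K) : ∃ τ : L ≃+* L, ∀ a, τ (algebraMap K L a) = algebraMap K L (σ a) := by
  obtain ⟨ι, b, hb⟩ := exists_isTranscendenceBasis' K L
  have := IsAlgClosed.isAlgClosure_of_transcendence_basis b hb
  let e := hb.1.aevalEquiv.toRingEquiv
  refine ⟨IsAlgClosure.equivOfEquiv L L ((e.symm.trans (MvPolynomial.mapEquiv ι σ)).trans e),
    fun a => ?_⟩
  have he : e.symm (algebraMap K _ a) = MvPolynomial.C a := hb.1.aevalEquiv.symm.commutes a
  have he' : e (MvPolynomial.C (σ a)) = algebraMap K _ (σ a) := hb.1.aevalEquiv.commutes (σ a)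
  rw [IsScalarTower.algebraMap_apply K (Algebra.adjoin K (Set.range b)) L,
    IsAlgClosure.equivOfEquiv_algebraMap]
  simp only [RingEquiv.trans_apply, he, MvPolynomial.mapEquiv_apply, MvPolynomial.map_C,
    RingHom.coe_coe, he', ← IsScalarTower.algebraMap_apply]

theorem mem_bot_of_forall_algEquiv_apply_eq {F L : Type*} [Field F] [Field L] [Algebra F L]
    [IsAlgClosed L] {c : L} (hc : IsSeparable F c) (hfix : ∀ τ : L ≃ₐ[F] L, τ c = c) :
    c ∈ (⊥ : IntermediateField F L) := by
  let c' : separableClosure F L := ⟨c, hc⟩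
  suffices c' ∈ (⊥ : IntermediateField F (separableClosure F L)) by
    obtain ⟨a, ha⟩ := IntermediateField.mem_bot.mp this
    exact IntermediateField.mem_bot.mpr ⟨a, congrArg Subtype.val ha⟩
  refine (InfiniteGalois.mem_bot_iff_fixed c').mpr fun σ => Subtype.ext ?_
  obtain ⟨τ, hτ⟩ := exists_ringEquiv_extending (L := L) σ.toRingEquiv
  have hτF (a : F) : τ (algebraMap F L a) = algebraMap F L a :=
    (hτ (algebraMap F _ a)).trans (congrArg Subtype.val (σ.commutes a))
  exact (hτ c').symm.trans (hfix (AlgEquiv.ofRingEquiv hτF))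

theorem exists_forall_apply_eq_pow_of_pow_eq_one {L : Type*} [Field L] (σ : L ≃+* L) {n : ℕ}
    (hn : n ≠ 0) : ∃ t : ℕ, ∀ ζ : L, ζ ^ n = 1 → σ ζ = ζ ^ t := by
  have : NeZero n := ⟨hn⟩
  exact ⟨_, fun ζ hζ => modularCyclotomicCharacter.toFun_spec' σ
    (t := Units.ofPowEqOne ζ n hζ hn) (Units.pow_ofPowEqOne hζ hn)⟩

end FieldAutomorphisms

section TraceOfPowers

variable {k V : Type*} [Field k] [AddCommGroup V] [Module k V] {f : End k V}

theorem pow_eq_one_of_hasEigenvalue {n : ℕ} (hf : f ^ n = 1) {μ : k} (hμ : f.HasEigenvalue μ) :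
    μ ^ n = 1 := by
  obtain ⟨v, hv⟩ := hμ.exists_hasEigenvector
  have hfv := hv.pow_apply n
  rw [hf, End.one_apply] at hfv
  exact smul_left_injective k hv.2 (hfv.symm.trans (one_smul k v).symm)

variable [FiniteDimensional k V]

theorem trace_pow_eq_sum_eigenvalues (hf : ⨆ μ, f.eigenspace μ = ⊤) (t : ℕ) :
    LinearMap.trace k V (f ^ t) =
      ∑ μ : f.Eigenvalues, (finrank k (f.eigenspace μ) : k) * (μ : k) ^ t := by
  classical
  have hint : DirectSum.IsInternal fun μ : f.Eigenvalues => f.eigenspace μ :=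
    DirectSum.isInternal_ne_bot_iff.mpr
      (DirectSum.isInternal_submodule_of_iSupIndep_of_iSup_eq_top f.eigenspaces_iSupIndep hf)
  have hpow (μ : f.Eigenvalues) (v : V) (hv : v ∈ f.eigenspace μ) :
      (f ^ t) v = (μ : k) ^ t • v := by
    rcases eq_or_ne v 0 with rfl | hv0
    · simp
    · exact End.HasEigenvector.pow_apply ⟨hv, hv0⟩ t
  have hmaps (μ : f.Eigenvalues) : Set.MapsTo (f ^ t) (f.eigenspace μ) (f.eigenspace μ) :=
    fun v hv => hpow μ v hv ▸ Submodule.smul_mem _ _ hv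
  rw [LinearMap.trace_eq_sum_trace_restrict hint hmaps]
  refine Finset.sum_congr rfl fun μ _ => ?_
  have hres : (f ^ t).restrict (hmaps μ) = (μ : k) ^ t • LinearMap.id :=
    LinearMap.ext fun v => Subtype.ext (hpow μ v v.2)
  rw [hres, map_smul, LinearMap.trace_id, smul_eq_mul, mul_comm]

variable [IsAlgClosed k] {n : ℕ}

theorem iSup_eigenspace_eq_top_of_pow_eq_one (hn : (n : k) ≠ 0) (hf : f ^ n = 1) :
    ⨆ μ, f.eigenspace μ = ⊤ := by
  have hsq := (Polynomial.separable_X_pow_sub_C (1 : k) hn one_ne_zero).squarefree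
  exact (End.isSemisimple_of_squarefree_aeval_eq_zero hsq (by simp [hf])).iSup_eigenspace_eq_top

theorem map_trace_eq_trace_pow (hn : (n : k) ≠ 0) (hf : f ^ n = 1) (σ : k →+* k) {t : ℕ}
    (hσ : ∀ ζ : k, ζ ^ n = 1 → σ ζ = ζ ^ t) :
    σ (LinearMap.trace k V f) = LinearMap.trace k V (f ^ t) := by
  have hdiag := iSup_eigenspace_eq_top_of_pow_eq_one hn hf
  rw [← pow_one f, trace_pow_eq_sum_eigenvalues hdiag, pow_one,
    trace_pow_eq_sum_eigenvalues hdiag, map_sum]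
  refine Finset.sum_congr rfl fun μ _ => ?_
  have hμ : (μ : k) ^ n = 1 := pow_eq_one_of_hasEigenvalue hf μ.2
  rw [map_mul, map_natCast, pow_one, hσ _ hμ]

theorem isIntegral_trace_of_pow_eq_one (hn : (n : k) ≠ 0) (hf : f ^ n = 1) :
    IsIntegral ℤ (LinearMap.trace k V f) := by
  have hn0 : 0 < n := Nat.pos_of_ne_zero fun h => hn (by simp [h])
  rw [← pow_one f, trace_pow_eq_sum_eigenvalues (iSup_eigenspace_eq_top_of_pow_eq_one hn hf)]
  refine IsIntegral.sum _ fun μ _ => (isIntegral_natCast _).mul (IsIntegral.pow ?_ 1)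
  exact .of_pow hn0 (pow_eq_one_of_hasEigenvalue hf μ.2 ▸ isIntegral_one)

end TraceOfPowers

section CharactersSeparateConjugacyClasses

universe u v

section ConjSum

variable (k : Type*) {G : Type*} [Semiring k] [Group G] [Fintype G]

/-- The sum of all conjugates `h x h⁻¹`, `h ∈ G`, in the group algebra: the class sum of `x`
multiplied by the order of the centralizer of `x`. -/
noncomputable def conjSum (x : G) : k[G] :=
  ∑ h : G, MonoidAlgebra.single (h * x * h⁻¹) 1

theorem conjSum_mem_center (x : G) : conjSum k x ∈ Submonoid.center k[G] := by
  have hsingle (g : G) (a : k) :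
      MonoidAlgebra.single g a * conjSum k x = conjSum k x * MonoidAlgebra.single g a := by
    rw [conjSum, Finset.mul_sum, Finset.sum_mul]
    refine Fintype.sum_equiv (Equiv.mulLeft g) _ _ fun h => ?_
    simp [MonoidAlgebra.single_mul_single, mul_assoc]
  refine Submonoid.mem_center_iff.mpr fun w => ?_
  induction w using MonoidAlgebra.induction_linear with
  | zero => rw [zero_mul, mul_zero]
  | add a b ha hb => rw [add_mul, mul_add, ha, hb]
  | single g a => exact hsingle g a

variable {k}

theorem coeff_conjSum (x y : G) :
    (conjSum k x).coeff y = Nat.card {h : G // h * x * h⁻¹ = y} := by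
  classical
  simp [conjSum, MonoidAlgebra.coeff_sum, Finsupp.single_apply, Fintype.card_subtype]

theorem isConj_of_conjSum_eq [CharZero k] {x y : G} (hxy : conjSum k x = conjSum k y) :
    IsConj x y := by
  have hcard : Nat.card {h : G // h * x * h⁻¹ = y} = Nat.card {h : G // h * y * h⁻¹ = y} := by
    rw [← Nat.cast_inj (R := k), ← coeff_conjSum, ← coeff_conjSum, hxy]
  have : Nonempty {h : G // h * y * h⁻¹ = y} := ⟨⟨1, by simp⟩⟩
  obtain ⟨⟨h, hh⟩⟩ := (Nat.card_pos_iff.mp (hcard.symm ▸ Nat.card_pos)).1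
  exact isConj_iff.mpr ⟨h, hh⟩

end ConjSum

theorem trace_asAlgebraHom_conjSum {k G V : Type*} [Field k] [Group G] [Fintype G]
    [AddCommGroup V] [Module k V] (ρ : Representation k G V) (x : G) :
    LinearMap.trace k V (ρ.asAlgebraHom (conjSum k x)) = Fintype.card G * ρ.character x := by
  have hconj (h : G) : LinearMap.trace k V (ρ (h * x * h⁻¹)) = ρ.character x := ρ.char_conj x h
  simp only [conjSum, map_sum, Representation.asAlgebraHom_single_one, hconj, Finset.sum_const,
    Finset.card_univ, nsmul_eq_mul]

theorem asAlgebraHom_eq_zero_of_trace_eq_zero {k G V : Type*} [Field k] [IsAlgClosed k] [CharZero k]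
    [Monoid G] [AddCommGroup V] [Module k V] [FiniteDimensional k V] (ρ : Representation k G V)
    [ρ.IsIrreducible] {z : k[G]} (hz : z ∈ Submonoid.center k[G])
    (htr : LinearMap.trace k V (ρ.asAlgebraHom z) = 0) : ρ.asAlgebraHom z = 0 := by
  obtain ⟨c, hc⟩ :=
    (Representation.IsIrreducible.algebraMap_intertwiningMap_bijective_of_isAlgClosed (ρ := ρ)).2
      (Representation.IntertwiningMap.centralAlgebraMul ρ hz)
  have hscalar : ρ.asAlgebraHom z = c • LinearMap.id :=
    (congrArg Representation.IntertwiningMap.toLinearMap hc).symm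
  have : Nontrivial V := IsSimpleModule.nontrivial k[G] ρ.asModule
  have hdim : (finrank k V : k) ≠ 0 := Nat.cast_ne_zero.mpr finrank_pos.ne'
  rw [hscalar, map_smul, LinearMap.trace_id, smul_eq_mul] at htr
  rw [hscalar, (mul_eq_zero.mp htr).resolve_right hdim, zero_smul]

theorem asAlgebraHom_ofModule' {k G M : Type*} [CommSemiring k] [Monoid G] [AddCommMonoid M]
    [Module k M] [Module k[G] M] [IsScalarTower k k[G] M] :
    (Representation.ofModule' (k := k) (G := G) M).asAlgebraHom = Algebra.lsmul k k M :=
  (MonoidAlgebra.lift k (End k M) G).apply_symm_apply _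

theorem isIrreducible_ofModule' {k G M : Type*} [Field k] [Monoid G] [AddCommGroup M] [Module k M]
    [Module k[G] M] [IsScalarTower k k[G] M] [IsSimpleModule k[G] M] :
    (Representation.ofModule' (k := k) (G := G) M).IsIrreducible := by
  let ρ := Representation.ofModule' (k := k) (G := G) M
  let e : ρ.asModule ≃ₗ[k[G]] M :=
    { ρ.asModuleEquiv with
      map_smul' := fun z v => by simp [ρ, asAlgebraHom_ofModule'] }
  exact ρ.irreducible_iff_isSimpleModule_asModule.mpr (.congr e)

theorem eq_zero_of_forall_asAlgebraHom_eq_zero {k : Type u} {G : Type v} [Field k] [Monoid G]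
    [Finite G] [IsSemisimpleRing k[G]] {z : k[G]}
    (hz : ∀ (V : Type (max u v)) [AddCommGroup V] [Module k V] [FiniteDimensional k V]
      (ρ : Representation k G V) [ρ.IsIrreducible], ρ.asAlgebraHom z = 0) : z = 0 := by
  suffices z ∈ Ring.jacobson k[G] by rwa [IsSemisimpleRing.jacobson_eq_bot] at this
  refine Submodule.mem_sInf.mpr fun m (hm : IsCoatom m) => ?_
  have := isSimpleModule_iff_isCoatom.mpr hm
  have := isIrreducible_ofModule' (k := k) (G := G) (M := k[G] ⧸ m)
  have : FiniteDimensional k (k[G] ⧸ m) := Module.Finite.trans k[G] _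
  have hzm : z • m.mkQ 1 = 0 := by
    simpa only [asAlgebraHom_ofModule', Algebra.lsmul_coe, LinearMap.zero_apply] using
      LinearMap.congr_fun (hz _ (Representation.ofModule' (k[G] ⧸ m))) (m.mkQ 1)
  rwa [← map_smul, smul_eq_mul, mul_one, Submodule.mkQ_apply, Submodule.Quotient.mk_eq_zero] at hzm

theorem isConj_of_forall_character_eq (k : Type u) {G : Type v} [Field k] [IsAlgClosed k]
    [CharZero k] [Group G] [Finite G] {x y : G}
    (hxy : ∀ (V : Type (max u v)) [AddCommGroup V] [Module k V] [FiniteDimensional k V]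
      (ρ : Representation k G V) [ρ.IsIrreducible], ρ.character x = ρ.character y) :
    IsConj x y := by
  have := Fintype.ofFinite G
  have : NeZero (Nat.card G : k) := ⟨Nat.cast_ne_zero.mpr Nat.card_pos.ne'⟩
  refine isConj_of_conjSum_eq (k := k) (sub_eq_zero.mp ?_)
  refine eq_zero_of_forall_asAlgebraHom_eq_zero fun V _ _ _ ρ _ => ?_
  refine asAlgebraHom_eq_zero_of_trace_eq_zero ρ
    ((Subring.center k[G]).sub_mem (conjSum_mem_center k x) (conjSum_mem_center k y)) ?_
  rw [map_sub, map_sub, trace_asAlgebraHom_conjSum, trace_asAlgebraHom_conjSum, hxy V ρ, sub_self]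

end CharactersSeparateConjugacyClasses

section Irr

variable {G : Type} [Group G]

theorem character_mem_irr [Finite G] {V : Type} [AddCommGroup V] [Module ℂ V]
    [FiniteDimensional ℂ V] (ρ : Representation ℂ G V) [ρ.IsIrreducible] :
    ρ.character ∈ Irr G := by
  classical
  have := Fintype.ofFinite G
  have hcard : (Nat.card G : ℂ) ≠ 0 := Nat.cast_ne_zero.mpr Nat.card_pos.ne'
  have := invertibleOfNonzero hcard
  refine ⟨FDRep.of ρ, (FDRep.simple_iff_char_is_norm_one _).mpr ?_, rfl⟩
  have horth := ρ.char_orthonormal ρ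
  rw [if_pos ⟨.refl ρ⟩] at horth
  exact ((inv_mul_eq_iff_eq_mul₀ hcard).mp horth).trans (mul_one _)

theorem isConj_of_forall_irr_apply_eq [Finite G] {x y : G} (hxy : ∀ χ ∈ Irr G, χ x = χ y) :
    IsConj x y :=
  isConj_of_forall_character_eq ℂ fun _ _ _ _ ρ _ => hxy _ (character_mem_irr ρ)

theorem irr_apply_eq_of_isConj {χ : G → ℂ} (hχ : χ ∈ Irr G) {x y : G} (hxy : IsConj x y) :
    χ x = χ y := by
  obtain ⟨V, -, rfl⟩ := hχ
  obtain ⟨g, rfl⟩ := isConj_iff.mp hxy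
  exact (V.char_conj x g).symm

theorem map_irr_apply_eq_irr_apply_pow {χ : G → ℂ} (hχ : χ ∈ Irr G) {x : G} {n : ℕ} (hn : n ≠ 0)
    (hx : x ^ n = 1) (σ : ℂ →+* ℂ) {t : ℕ}
    (hσ : ∀ ζ : ℂ, ζ ^ n = 1 → σ ζ = ζ ^ t) : σ (χ x) = χ (x ^ t) := by
  obtain ⟨V, -, rfl⟩ := hχ
  have hρ : V.ρ x ^ n = 1 := by rw [← map_pow, hx, map_one]
  simpa only [FDRep.character, map_pow] using
    map_trace_eq_trace_pow (Nat.cast_ne_zero.mpr hn) hρ σ hσ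

theorem isIntegral_irr_apply {χ : G → ℂ} (hχ : χ ∈ Irr G) {x : G} {n : ℕ} (hn : n ≠ 0)
    (hx : x ^ n = 1) : IsIntegral ℤ (χ x) := by
  obtain ⟨V, -, rfl⟩ := hχ
  exact isIntegral_trace_of_pow_eq_one (Nat.cast_ne_zero.mpr hn)
    (by rw [← map_pow, hx, map_one] : V.ρ x ^ n = 1)

end Irr

section FieldOfValues

/-- The field of values `ℚ_G(x)`, the subfield of `ℂ` generated by the values at `x` of the
irreducible complex characters of `G`, encoded as an intermediate field of `ℂ / ℚ`. -/
noncomputable def fieldOfValues (G : Type) [Group G] (x : G) : IntermediateField ℚ ℂ :=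
  IntermediateField.adjoin ℚ {c : ℂ | ∃ χ ∈ Irr G, χ x = c}

theorem irr_apply_mem_fieldOfValues {G : Type} [Group G] {χ : G → ℂ} (hχ : χ ∈ Irr G) (x : G) :
    χ x ∈ fieldOfValues G x :=
  IntermediateField.subset_adjoin _ _ ⟨χ, hχ, rfl⟩

theorem fieldOfValues_le_of_forall_isConj_pow {A B : Type} [Group A] [Finite A] [Group B] {x : A}
    {y : B} (hy : IsOfFinOrder y) (hconj : ∀ t : ℕ, IsConj x (x ^ t) → IsConj y (y ^ t)) :
    fieldOfValues B y ≤ fieldOfValues A x := by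
  refine IntermediateField.adjoin_le_iff.mpr ?_
  rintro _ ⟨ψ, hψ, rfl⟩
  have hn : orderOf x * orderOf y ≠ 0 := mul_ne_zero (orderOf_pos x).ne' hy.orderOf_pos.ne'
  have hxn : x ^ (orderOf x * orderOf y) = 1 := by rw [pow_mul, pow_orderOf_eq_one, one_pow]
  have hyn : y ^ (orderOf x * orderOf y) = 1 := by rw [pow_mul', pow_orderOf_eq_one, one_pow]
  have hsep : IsSeparable (fieldOfValues A x) (ψ y) := PerfectField.separable_of_irreducible
    (minpoly.irreducible (isIntegral_irr_apply hψ hn hyn).tower_top)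
  have hfix (τ : ℂ ≃ₐ[fieldOfValues A x] ℂ) : τ (ψ y) = ψ y := by
    obtain ⟨t, ht⟩ := exists_forall_apply_eq_pow_of_pow_eq_one τ.toRingEquiv hn
    have hxt : IsConj x (x ^ t) := isConj_of_forall_irr_apply_eq fun χ hχ =>
      (τ.commutes ⟨χ x, irr_apply_mem_fieldOfValues hχ x⟩).symm.trans
        (map_irr_apply_eq_irr_apply_pow hχ hn hxn (τ : ℂ →+* ℂ) ht)
    calc τ (ψ y) = ψ (y ^ t) := map_irr_apply_eq_irr_apply_pow hψ hn hyn (τ : ℂ →+* ℂ) ht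
      _ = ψ y := (irr_apply_eq_of_isConj hψ (hconj t hxt)).symm
  obtain ⟨a, ha⟩ := IntermediateField.mem_bot.mp (mem_bot_of_forall_algEquiv_apply_eq hsep hfix)
  exact ha ▸ a.2

end FieldOfValues

section Subnormalizer

variable {G : Type*} [Group G]

theorem NormalIn.subnormalIn {H K : Subgroup G} (hHK : NormalIn H K) : SubnormalIn H K :=
  ⟨1, fun i => if i = 0 then H else K, rfl, rfl, fun i hi => by
    simpa [Nat.lt_one_iff.mp hi] using hHK⟩

theorem normalIn_of_le_normalizer {H K : Subgroup G} (hHK : H ≤ K)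
    (hK : K ≤ Subgroup.normalizer H) : NormalIn H K :=
  ⟨hHK, fun _ hk h hh => (Subgroup.mem_normalizer_iff.mp (hK hk) h).mp hh⟩

theorem normalizer_zpowers_le_subnormalizer (x : G) :
    Subgroup.normalizer (Subgroup.zpowers x : Set G) ≤ subnormalizer G x := by
  refine fun g hg => Subgroup.subset_closure (normalIn_of_le_normalizer ?_ ?_).subnormalIn
  · exact Subgroup.zpowers_le.mpr (Subgroup.subset_closure (Set.mem_insert x _))
  · rw [Subgroup.closure_le, Set.pair_subset_iff]
    exact ⟨Subgroup.le_normalizer (Subgroup.mem_zpowers x), hg⟩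

theorem mem_normalizer_zpowers_of_conj_eq_pow [Finite G] {x g : G} {t : ℕ}
    (hg : g * x * g⁻¹ = x ^ t) : g ∈ Subgroup.normalizer (Subgroup.zpowers x : Set G) := by
  refine Subgroup.mem_normalizer_fintype ?_
  rintro _ ⟨j, rfl⟩
  exact ⟨t * j, by simp only [zpow_mul, zpow_natCast, ← hg, conj_zpow]⟩

end Subnormalizer

theorem field_of_values_eq_subnormalizer_general {G : Type} [Group G] [Finite G] {H : Subgroup G}
    (x : H) (hH : Subgroup.normalizer (Subgroup.zpowers (x : G) : Set G) ≤ H) :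
    fieldOfValues G x = fieldOfValues H x := by
  apply le_antisymm
  · exact fieldOfValues_le_of_forall_isConj_pow (isOfFinOrder_of_finite _)
      fun t hxt => H.subtype.map_isConj hxt
  · refine fieldOfValues_le_of_forall_isConj_pow (isOfFinOrder_of_finite _) fun t hxt => ?_
    obtain ⟨g, hg⟩ := isConj_iff.mp hxt
    have hgH : g ∈ H := hH (mem_normalizer_zpowers_of_conj_eq_pow hg)
    exact isConj_iff.mpr ⟨⟨g, hgH⟩, Subtype.ext hg⟩

/-- Let `x` be a `p`-element of a finite group `G`.  Then `ℚ_G(x) = ℚ_{Sub_G(x)}(x)`: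
the subfield of `ℂ` generated over `ℚ` by the values `χ(x)`, `χ ∈ Irr(G)`, equals the
subfield generated over `ℚ` by the values `ψ(x)`, `ψ ∈ Irr(Sub_G(x))`. -/
theorem field_of_values_eq_subnormalizer (G : Type) [Group G] [Finite G] (p : ℕ)
    [Fact p.Prime] (x : G) (hx : ∃ k : ℕ, orderOf x = p ^ k) :
    IntermediateField.adjoin ℚ {c : ℂ | ∃ χ ∈ Irr G, χ x = c} =
      IntermediateField.adjoin ℚ
        {c : ℂ | ∃ ψ ∈ Irr (subnormalizer G x), ψ ⟨x, mem_subnormalizer_self x⟩ = c} :=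
  field_of_values_eq_subnormalizer_general ⟨x, mem_subnormalizer_self x⟩
    (normalizer_zpowers_le_subnormalizer x)
end
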